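/- Let p be a nonnegative integer and μ a probability measure in M_p. (a) If y↦μ((y,∞)) is regularly varying of index −p, then for every ε>0, y^{ε}·|Re r_G(iy)| → ∞ as y→∞; if moreover p=0, then Re r_G(iy) ~ −μ((y,∞)) as y→∞. (b) If y↦μ((y,∞)) is regularly varying of index −(p+1), then y↦−Im r_G(iy) is regularly varying of index −1, and for every ε>0, y·|Im r_G(iy)| → ∞ and y^{1−ε}·Im r_G(iy) → 0 as y→∞. -/

import Mathlib

open MeasureTheory Filter Topology
open scoped ENNReal

noncomputable section

/-- A function, positive on `(0,∞)`, is regularly varying at infinity with index `ρ`. -/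
def RegVarying (f : ℝ → ℝ) (ρ : ℝ) : Prop :=
  (∀ x : ℝ, 0 < x → 0 < f x) ∧
    ∀ t : ℝ, 0 < t → Tendsto (fun x : ℝ => f (t * x) / f x) atTop (nhds (t ^ ρ))

/-- `μ ∈ M_p`: a Borel probability measure on `[0,∞)` with finite `p`-th moment and
infinite `(p+1)`-th moment. -/
def MemMp (μ : Measure ℝ) (p : ℕ) : Prop :=
  IsProbabilityMeasure μ ∧ μ (Set.Iio 0) = 0 ∧
    (∫⁻ t, ENNReal.ofReal (t ^ p) ∂μ) ≠ ⊤ ∧ (∫⁻ t, ENNReal.ofReal (t ^ (p + 1)) ∂μ) = ⊤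

/-- The remainder term in the Laurent series expansion of the Cauchy transform of `μ`:
`r_G(z) = ∫₀^∞ t^{p+1} (z − t)⁻¹ dμ(t)`. -/
def rG (μ : Measure ℝ) (p : ℕ) (z : ℂ) : ℂ :=
  ∫ t : ℝ, (t : ℂ) ^ (p + 1) / (z - (t : ℂ)) ∂μ

/-!
On the imaginary axis `-Re r_G(iy) = ∫ t^p / (1 + (y / t)²) dμ(t)` is a smoothed tail moment and
`-y Im r_G(iy) = ∫ t^(p+1) / (1 + (t / y)²) dμ(t)` a smoothly truncated moment. Write `F` for the
tail of `μ` and `M(y) = ∫_{(0,y]} t^(p+1) dμ(t)`. Comparing `2x` with `x` gives the one-sided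
Karamata bounds for `∫_{(0,x]} t^q dμ(t)` and `∫_{(x,∞)} t^q dμ(t)` in terms of `x^q F(x)`.
When `F` has index `-(p+1)`, the smoothly truncated moment is `M(y) + O(y^(p+1) F(y))`. Now
`y^(p+1) F(y)` is slowly varying, so every dyadic block contributes about the same amount to `M`;
hence `y^(p+1) F(y) = o(M(y))`, and both `M` and the smoothly truncated moment vary slowly.
When `F` has index `-p`, the smoothed tail moment is at least `y^p F(y) / 2`, and for `p = 0` it is
squeezed between multiples of `F(y / δ)` and `F(δ y)` whose constants tend to `1` as `δ → 0`.
-/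

open Set Asymptotics

section Doubling

variable {g : ℝ → ℝ} {X C : ℝ}

lemma two_pow_mul_le_of_two_mul_le (hX : 0 ≤ X) (h : ∀ x, X ≤ x → g (2 * x) ≤ g x) (n : ℕ)
    {x : ℝ} (hx : X ≤ x) : g (2 ^ n * x) ≤ g x := by
  induction n with
  | zero => simp
  | succ n ih =>
    have hXn : X ≤ 2 ^ n * x :=
      hx.trans (le_mul_of_one_le_left (hX.trans hx) (one_le_pow₀ one_le_two))
    rw [pow_succ', mul_assoc]
    exact (h _ hXn).trans ih

lemma le_of_two_mul_le_of_le_on_Icc (hX : 0 < X) (h : ∀ x, X ≤ x → g (2 * x) ≤ g x)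
    (hC : ∀ x ∈ Icc X (2 * X), g x ≤ C) {x : ℝ} (hx : X ≤ x) : g x ≤ C := by
  obtain ⟨n, hnx, hxn⟩ := exists_nat_pow_near ((one_le_div hX).2 hx) (one_lt_two (α := ℝ))
  rw [le_div_iff₀ hX] at hnx
  rw [div_lt_iff₀ hX, pow_succ, mul_assoc] at hxn
  have hz : x / 2 ^ n ∈ Icc X (2 * X) :=
    ⟨(le_div_iff₀' (by positivity)).2 hnx, (div_le_iff₀' (by positivity)).2 hxn.le⟩
  calc g x = g (2 ^ n * (x / 2 ^ n)) := by rw [mul_div_cancel₀ _ (by positivity)]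
    _ ≤ g (x / 2 ^ n) := two_pow_mul_le_of_two_mul_le hX.le h n hz.1
    _ ≤ C := hC _ hz

end Doubling

section RegularVariation

variable {f g S W : ℝ → ℝ} {ρ σ c t C : ℝ}

lemma regVarying_rpow (σ : ℝ) : RegVarying (fun x => x ^ σ) σ := by
  refine ⟨fun x hx => Real.rpow_pos_of_pos hx σ, fun t ht => tendsto_const_nhds.congr' ?_⟩
  filter_upwards [eventually_gt_atTop 0] with x hx
  rw [Real.mul_rpow ht.le hx.le, mul_div_cancel_right₀ _ (Real.rpow_pos_of_pos hx σ).ne']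

namespace RegVarying

lemma congr (hf : RegVarying f ρ) (h : EqOn f g (Ioi 0)) : RegVarying g ρ := by
  refine ⟨fun x hx => h hx ▸ hf.1 x hx, fun t ht => (hf.2 t ht).congr' ?_⟩
  filter_upwards [eventually_gt_atTop 0] with x hx
  rw [h hx, h (mul_pos ht hx)]

lemma mul (hf : RegVarying f ρ) (hg : RegVarying g σ) :
    RegVarying (fun x => f x * g x) (ρ + σ) := by
  refine ⟨fun x hx => mul_pos (hf.1 x hx) (hg.1 x hx), fun t ht => ?_⟩
  rw [Real.rpow_add ht]
  exact ((hf.2 t ht).mul (hg.2 t ht)).congr fun x => div_mul_div_comm ..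

lemma inv (hf : RegVarying f ρ) : RegVarying (fun x => (f x)⁻¹) (-ρ) := by
  refine ⟨fun x hx => inv_pos.2 (hf.1 x hx), fun t ht => ?_⟩
  rw [Real.rpow_neg ht.le]
  refine ((hf.2 t ht).inv₀ (Real.rpow_pos_of_pos ht ρ).ne').congr fun x => ?_
  rw [inv_div_inv, inv_div]

lemma rpow_mul (hf : RegVarying f ρ) (σ : ℝ) : RegVarying (fun x => x ^ σ * f x) (σ + ρ) :=
  (regVarying_rpow σ).mul hf

lemma eventually_comp_mul_le (hf : RegVarying f ρ) (ht : 0 < t) (hc : t ^ ρ < c) :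
    ∀ᶠ x in atTop, f (t * x) ≤ c * f x := by
  filter_upwards [(hf.2 t ht).eventually_lt_const hc, eventually_gt_atTop 0] with x hlt hx
  exact ((div_lt_iff₀ (hf.1 x hx)).1 hlt).le

lemma eventually_le_comp_mul (hf : RegVarying f ρ) (ht : 0 < t) (hc : c < t ^ ρ) :
    ∀ᶠ x in atTop, c * f x ≤ f (t * x) := by
  filter_upwards [(hf.2 t ht).eventually_const_lt hc, eventually_gt_atTop 0] with x hlt hx
  exact ((lt_div_iff₀ (hf.1 x hx)).1 hlt).le

lemma of_one_le (hpos : ∀ x, 0 < x → 0 < f x)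
    (h : ∀ t, 1 ≤ t → Tendsto (fun x => f (t * x) / f x) atTop (𝓝 (t ^ ρ))) :
    RegVarying f ρ := by
  refine ⟨hpos, fun t ht => ?_⟩
  rcases le_total 1 t with ht1 | ht1
  · exact h t ht1
  · have hinv := ((h t⁻¹ ((one_le_inv₀ ht).2 ht1)).comp
      (tendsto_id.const_mul_atTop ht)).inv₀ (by positivity)
    rw [Real.inv_rpow ht.le, inv_inv] at hinv
    refine hinv.congr fun x => ?_
    simp only [Function.comp_apply, id, inv_mul_cancel_left₀ ht.ne', inv_div]

lemma nonneg_of_monotoneOn (hf : RegVarying f ρ) (hmono : MonotoneOn f (Ioi 0)) : 0 ≤ ρ := by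
  have hone : 1 ≤ (2 : ℝ) ^ ρ := by
    refine ge_of_tendsto (hf.2 2 two_pos) ?_
    filter_upwards [eventually_gt_atTop 0] with x hx
    exact (one_le_div (hf.1 x hx)).2 (hmono hx (mul_pos two_pos hx) (by linarith))
  by_contra! hρ
  exact hone.not_gt (Real.rpow_lt_one_of_one_lt_of_neg one_lt_two hρ)

lemma exists_eventually_rpow_mul_le_of_monotoneOn (hf : RegVarying f ρ)
    (hmono : MonotoneOn f (Ioi 0)) (hσ : σ + ρ < 0) :
    ∃ B, ∀ᶠ x in atTop, x ^ σ * f x ≤ B := by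
  have hσ0 : σ ≤ 0 := by linarith [hf.nonneg_of_monotoneOn hmono]
  have hdecr : ∀ᶠ x in atTop, (2 * x) ^ σ * f (2 * x) ≤ 1 * (x ^ σ * f x) :=
    (hf.rpow_mul σ).eventually_comp_mul_le two_pos
      (Real.rpow_lt_one_of_one_lt_of_neg one_lt_two hσ)
  obtain ⟨X, hX⟩ := eventually_atTop.1 (hdecr.and (eventually_ge_atTop 1))
  have hX1 : 1 ≤ X := (hX X le_rfl).2
  refine ⟨f (2 * X), eventually_atTop.2 ⟨X, fun x hx => ?_⟩⟩
  refine le_of_two_mul_le_of_le_on_Icc (g := fun x => x ^ σ * f x) (zero_lt_one.trans_le hX1)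
    (fun x hx => by simpa only [one_mul] using (hX x hx).1) (fun x hx => ?_) hx
  have hx0 : 0 < x := by linarith [hx.1]
  exact (mul_le_of_le_one_left (hf.1 x hx0).le
    (Real.rpow_le_one_of_one_le_of_nonpos (hX1.trans hx.1) hσ0)).trans
    (hmono hx0 (hx0.trans_le hx.2) hx.2)

lemma tendsto_rpow_mul_zero_of_monotoneOn (hf : RegVarying f ρ) (hmono : MonotoneOn f (Ioi 0))
    (hσ : σ + ρ < 0) : Tendsto (fun x => x ^ σ * f x) atTop (𝓝 0) := by
  obtain ⟨τ, hστ, hτρ⟩ := exists_between (show σ < -ρ by linarith)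
  obtain ⟨B, hB⟩ := hf.exists_eventually_rpow_mul_le_of_monotoneOn hmono
    (show τ + ρ < 0 by linarith)
  have hlim : Tendsto (fun x : ℝ => x ^ (σ - τ) * B) atTop (𝓝 0) := by
    simpa using (tendsto_rpow_neg_atTop (sub_pos.2 hστ)).mul_const B
  refine squeeze_zero' ?_ ?_ hlim
  · filter_upwards [eventually_gt_atTop 0] with x hx
    exact ((hf.rpow_mul σ).1 x hx).le
  · filter_upwards [hB, eventually_gt_atTop 0] with x hxB hx
    calc x ^ σ * f x = x ^ (σ - τ) * (x ^ τ * f x) := by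
          rw [← mul_assoc, ← Real.rpow_add hx, sub_add_cancel]
      _ ≤ x ^ (σ - τ) * B := by gcongr

lemma tendsto_rpow_mul_atTop_of_antitoneOn (hf : RegVarying f ρ) (hanti : AntitoneOn f (Ioi 0))
    (hσ : 0 < σ + ρ) : Tendsto (fun x => x ^ σ * f x) atTop atTop := by
  have hzero : Tendsto (fun x => x ^ (-σ) * (f x)⁻¹) atTop (𝓝 0) :=
    hf.inv.tendsto_rpow_mul_zero_of_monotoneOn
      (fun x hx y hy hxy => inv_anti₀ (hf.1 y hy) (hanti hx hy hxy)) (by linarith)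
  have hpos : ∀ᶠ x in atTop, x ^ (-σ) * (f x)⁻¹ ∈ Ioi 0 := by
    filter_upwards [eventually_gt_atTop 0] with x hx using (hf.inv.rpow_mul (-σ)).1 x hx
  refine (tendsto_nhdsWithin_iff.2 ⟨hzero, hpos⟩).inv_tendsto_nhdsGT_zero.congr' ?_
  filter_upwards [eventually_gt_atTop 0] with x hx
  simp only [Pi.inv_apply, mul_inv, Real.rpow_neg hx.le, inv_inv]

lemma isBigO_of_two_mul_le_add (hW : RegVarying W ρ) (hρ : 0 < ρ) (hWtop : Tendsto W atTop atTop)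
    (hS : MonotoneOn S (Ioi 0)) (hS0 : ∀ x, 0 < x → 0 ≤ S x)
    (h : ∀ x, 0 < x → S (2 * x) ≤ S x + C * W x) : S =O[atTop] W := by
  obtain ⟨c, hc1, hc⟩ := exists_between (Real.one_lt_rpow one_lt_two hρ)
  have hc0 : 0 < c - 1 := sub_pos.2 hc1
  -- `B` solves `C = B * (c - 1)`, so that `S - B * W` does not increase under doubling.
  set B := |C| / (c - 1) with hB
  have hBC : C ≤ B * c - B := by
    rw [← mul_sub_one, hB, div_mul_cancel₀ _ hc0.ne']
    exact le_abs_self C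
  obtain ⟨X, hX⟩ := eventually_atTop.1
    ((hW.eventually_le_comp_mul two_pos hc).and (eventually_gt_atTop 0))
  have hX0 : 0 < X := (hX X le_rfl).2
  have hbound : ∀ x, X ≤ x → S x - B * W x ≤ S (2 * X) := fun x hx => by
    refine le_of_two_mul_le_of_le_on_Icc (g := fun x => S x - B * W x) hX0
      (fun x hx => ?_) (fun x hx => ?_) hx
    · obtain ⟨hWx, hx0⟩ := hX x hx
      have hBW : B * (c * W x) ≤ B * W (2 * x) := by gcongr
      linarith [h x hx0, mul_le_mul_of_nonneg_right hBC (hW.1 x hx0).le]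
    · have hx0 : 0 < x := hX0.trans_le hx.1
      have hBW : 0 ≤ B * W x := mul_nonneg (by positivity) (hW.1 x hx0).le
      linarith [hS hx0 (hx0.trans_le hx.2) hx.2]
  refine IsBigO.of_bound (B + 1) ?_
  filter_upwards [eventually_ge_atTop X, hWtop.eventually_ge_atTop (S (2 * X))] with x hx hWx
  have hx0 : 0 < x := hX0.trans_le hx
  rw [Real.norm_of_nonneg (hS0 x hx0), Real.norm_of_nonneg (hW.1 x hx0).le]
  linarith [hbound x hx]

lemma isBigO_of_le_two_mul_add (hW : RegVarying W ρ) (hρ : ρ < 0) (hS : Tendsto S atTop (𝓝 0))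
    (hS0 : ∀ x, 0 < x → 0 ≤ S x) (h : ∀ x, 0 < x → S x ≤ S (2 * x) + C * W x) :
    S =O[atTop] W := by
  obtain ⟨c, hc, hc1⟩ := exists_between (Real.rpow_lt_one_of_one_lt_of_neg one_lt_two hρ)
  have hc0 : 0 < 1 - c := sub_pos.2 hc1
  -- `B` solves `C = B * (1 - c)`, so that `B * W - S` does not increase under doubling.
  set B := |C| / (1 - c) with hB
  have hBC : C ≤ B - B * c := by
    rw [← mul_one_sub, hB, div_mul_cancel₀ _ hc0.ne']
    exact le_abs_self C
  obtain ⟨X, hX⟩ := eventually_atTop.1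
    ((hW.eventually_comp_mul_le two_pos hc).and (eventually_gt_atTop 0))
  have hX0 : 0 < X := (hX X le_rfl).2
  have hdecr : ∀ x, X ≤ x → B * W (2 * x) - S (2 * x) ≤ B * W x - S x := fun x hx => by
    obtain ⟨hWx, hx0⟩ := hX x hx
    have hBW : B * W (2 * x) ≤ B * (c * W x) := by gcongr
    linarith [h x hx0, mul_le_mul_of_nonneg_right hBC (hW.1 x hx0).le]
  refine IsBigO.of_bound B ?_
  filter_upwards [eventually_ge_atTop X] with x hx
  have hx0 : 0 < x := hX0.trans_le hx
  have hiter : ∀ n : ℕ, -S (2 ^ n * x) ≤ B * W x - S x := fun n => by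
    have hW0 : 0 ≤ B * W (2 ^ n * x) := mul_nonneg (by positivity) (hW.1 _ (by positivity)).le
    linarith [two_pow_mul_le_of_two_mul_le (g := fun x => B * W x - S x) hX0.le hdecr n hx]
  have hlim : Tendsto (fun n : ℕ => -S (2 ^ n * x)) atTop (𝓝 (-0)) :=
    (hS.comp ((tendsto_pow_atTop_atTop_of_one_lt one_lt_two).atTop_mul_const hx0)).neg
  rw [Real.norm_of_nonneg (hS0 x hx0), Real.norm_of_nonneg (hW.1 x hx0).le]
  linarith [le_of_tendsto' hlim hiter]

lemma isLittleO_of_add_le_two_mul (hW : RegVarying W 0) (hS0 : ∀ᶠ x in atTop, 0 ≤ S x)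
    (hc : 0 < c) (h : ∀ᶠ x in atTop, S x + c * W x ≤ S (2 * x)) : W =o[atTop] S := by
  have hmul : ∀ n : ℕ, ∀ᶠ x in atTop, n * (c / 2 * W x) ≤ S x := by
    intro n
    induction n with
    | zero => simpa using hS0
    | succ n ih =>
      have hratio : (2 : ℝ) ^ (0 : ℝ) < (n + 2) / (n + 1) := by
        rw [Real.rpow_zero, one_lt_div (by positivity)]
        linarith
      have hdouble : ∀ᶠ x in atTop, (n + 1 : ℕ) * (c / 2 * W (2 * x)) ≤ S (2 * x) := by
        filter_upwards [ih, h, hW.eventually_comp_mul_le two_pos hratio] with x hn hx hW2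
        calc (n + 1 : ℕ) * (c / 2 * W (2 * x))
            ≤ (n + 1 : ℕ) * (c / 2 * ((n + 2) / (n + 1) * W x)) := by gcongr
          _ = n * (c / 2 * W x) + c * W x := by push_cast; field_simp
          _ ≤ S (2 * x) := by linarith
      filter_upwards [(tendsto_id.atTop_div_const two_pos).eventually hdouble] with x hx
      simpa only [id, mul_div_cancel₀ x two_ne_zero] using hx
  refine (isLittleO_const_mul_left_iff (half_pos hc).ne').1 (isLittleO_iff_nat_mul_le.2 fun n => ?_)
  filter_upwards [hmul n, hS0, eventually_gt_atTop 0] with x hn hSx hx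
  rwa [Real.norm_of_nonneg (mul_nonneg (half_pos hc).le (hW.1 x hx).le), Real.norm_of_nonneg hSx]

end RegVarying

end RegularVariation

section Karamata

variable {μ : Measure ℝ} {ρ q a x y z : ℝ} {f : ℝ → ℝ}

namespace RegVarying

lemma measure_Ioi_ne_top (h : RegVarying (fun x => μ.real (Ioi x)) ρ) (hx : 0 < x) :
    μ (Ioi x) ≠ ⊤ :=
  fun htop => (h.1 x hx).ne' (by simp only [measureReal_def, htop, ENNReal.toReal_top])

lemma measure_Ioi_zero_ne_zero (h : RegVarying (fun x => μ.real (Ioi x)) ρ) :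
    μ (Ioi 0) ≠ 0 := fun hzero =>
  (h.1 1 one_pos).ne' (by
    simp only [measureReal_def, measure_mono_null (Ioi_subset_Ioi zero_le_one) hzero,
      ENNReal.toReal_zero])

lemma antitoneOn_measureReal_Ioi (h : RegVarying (fun x => μ.real (Ioi x)) ρ) :
    AntitoneOn (fun x => μ.real (Ioi x)) (Ioi 0) :=
  fun _ hx _ _ hxy => measureReal_mono (Ioi_subset_Ioi hxy) (h.measure_Ioi_ne_top hx)

end RegVarying

lemma setIntegral_Ioc_rpow_le (hq : 0 ≤ q) (hx : 0 ≤ x) (hμ : μ (Ioi x) ≠ ⊤) (hxy : x ≤ y) :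
    ∫ t in Ioc x y, t ^ q ∂μ ≤ y ^ q * μ.real (Ioi x) := by
  have hbound : ∀ t ∈ Ioc x y, ‖t ^ q‖ ≤ y ^ q := fun t ht => by
    have ht0 : 0 ≤ t := hx.trans ht.1.le
    rw [Real.norm_of_nonneg (Real.rpow_nonneg ht0 q)]
    exact Real.rpow_le_rpow ht0 ht.2 hq
  calc ∫ t in Ioc x y, t ^ q ∂μ ≤ y ^ q * μ.real (Ioc x y) :=
        (le_abs_self _).trans (norm_setIntegral_le_of_norm_le_const
          ((measure_mono Ioc_subset_Ioi_self).trans_lt hμ.lt_top) hbound)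
    _ ≤ y ^ q * μ.real (Ioi x) :=
        mul_le_mul_of_nonneg_left (measureReal_mono Ioc_subset_Ioi_self hμ)
          (Real.rpow_nonneg (hx.trans hxy) q)

lemma rpow_mul_measureReal_Ioi_sub_le_setIntegral_Ioc (hq : 0 ≤ q) (hx : 0 ≤ x)
    (hμ : μ (Ioi x) ≠ ⊤) (hxy : x ≤ y) (hint : IntegrableOn (fun t => t ^ q) (Ioc x y) μ) :
    x ^ q * (μ.real (Ioi x) - μ.real (Ioi y)) ≤ ∫ t in Ioc x y, t ^ q ∂μ := by
  rw [← measureReal_sdiff (Ioi_subset_Ioi hxy) measurableSet_Ioi hμ, Ioi_sdiff_Ioi]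
  exact setIntegral_ge_of_const_le_real measurableSet_Ioc
    (measure_ne_top_of_subset Ioc_subset_Ioi_self hμ)
    (fun t ht => Real.rpow_le_rpow hx ht.1.le hq) hint

lemma setIntegral_rpow_nonneg {s : Set ℝ} (hs : MeasurableSet s) (hs0 : s ⊆ Ioi 0) :
    0 ≤ ∫ t in s, t ^ q ∂μ :=
  setIntegral_nonneg hs fun _ ht => Real.rpow_nonneg (hs0 ht).le q

lemma setIntegral_Ioi_eq_add (hf : IntegrableOn f (Ioi x) μ) (hxy : x ≤ y) :
    ∫ t in Ioi x, f t ∂μ = (∫ t in Ioi y, f t ∂μ) + ∫ t in Ioc x y, f t ∂μ := by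
  rw [← Ioc_union_Ioi_eq_Ioi hxy] at hf ⊢
  rw [add_comm]
  exact setIntegral_union (Ioc_disjoint_Ioi le_rfl) measurableSet_Ioi hf.left_of_union
    hf.right_of_union

lemma setIntegral_Ioc_eq_add (hf : IntegrableOn f (Ioc x z) μ) (hxy : x ≤ y)
    (hyz : y ≤ z) :
    ∫ t in Ioc x z, f t ∂μ = (∫ t in Ioc x y, f t ∂μ) + ∫ t in Ioc y z, f t ∂μ := by
  rw [← Ioc_union_Ioc_eq_Ioc hxy hyz] at hf ⊢
  exact setIntegral_union (Ioc_disjoint_Ioc_of_le le_rfl) measurableSet_Ioc hf.left_of_union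
    hf.right_of_union

namespace RegVarying

theorem isBigO_setIntegral_Ioc_rpow (h : RegVarying (fun x => μ.real (Ioi x)) ρ) (hq : 0 ≤ q)
    (hρ : 0 < q + ρ) (hint : ∀ x, IntegrableOn (fun t => t ^ q) (Ioc 0 x) μ) :
    (fun x => ∫ t in Ioc 0 x, t ^ q ∂μ) =O[atTop] fun x => x ^ q * μ.real (Ioi x) := by
  refine (h.rpow_mul q).isBigO_of_two_mul_le_add (C := 2 ^ q) hρ
    (h.tendsto_rpow_mul_atTop_of_antitoneOn h.antitoneOn_measureReal_Ioi hρ)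
    (fun x _ y _ hxy => ?_) (fun x _ => setIntegral_rpow_nonneg measurableSet_Ioc
      Ioc_subset_Ioi_self) fun x hx => ?_
  · refine setIntegral_mono_set (hint y) ?_ (Ioc_subset_Ioc_right hxy).eventuallyLE
    filter_upwards [ae_restrict_mem measurableSet_Ioc] with t ht
      using Real.rpow_nonneg ht.1.le q
  · have hx2 : x ≤ 2 * x := by linarith
    have hle := setIntegral_Ioc_rpow_le hq hx.le (h.measure_Ioi_ne_top hx) hx2
    rw [Real.mul_rpow two_pos.le hx.le, mul_assoc] at hle
    rw [setIntegral_Ioc_eq_add (hint _) hx.le hx2]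
    gcongr

theorem isBigO_setIntegral_Ioi_rpow (h : RegVarying (fun x => μ.real (Ioi x)) ρ) (hq : 0 ≤ q)
    (hρ : q + ρ < 0) (hint : ∀ x, 0 < x → IntegrableOn (fun t => t ^ q) (Ioi x) μ) :
    (fun x => ∫ t in Ioi x, t ^ q ∂μ) =O[atTop] fun x => x ^ q * μ.real (Ioi x) := by
  refine (h.rpow_mul q).isBigO_of_le_two_mul_add (C := 2 ^ q) hρ
    (tendsto_integral_Ioi_zero tendsto_id) (fun x hx => setIntegral_rpow_nonneg measurableSet_Ioi
      (Ioi_subset_Ioi hx.le)) fun x hx => ?_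
  have hx2 : x ≤ 2 * x := by linarith
  have hle := setIntegral_Ioc_rpow_le hq hx.le (h.measure_Ioi_ne_top hx) hx2
  rw [Real.mul_rpow two_pos.le hx.le, mul_assoc] at hle
  rw [setIntegral_Ioi_eq_add (hint x hx) hx2]
  gcongr

theorem isLittleO_setIntegral_Ioc_rpow (h : RegVarying (fun x => μ.real (Ioi x)) (-q))
    (hq : 0 < q) (hint : ∀ x, IntegrableOn (fun t => t ^ q) (Ioc 0 x) μ) :
    (fun x => x ^ q * μ.real (Ioi x)) =o[atTop] fun x => ∫ t in Ioc 0 x, t ^ q ∂μ := by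
  obtain ⟨c, hc, hc1⟩ :=
    exists_between (Real.rpow_lt_one_of_one_lt_of_neg one_lt_two (neg_lt_zero.2 hq))
  have hslow : RegVarying (fun x => x ^ q * μ.real (Ioi x)) 0 := add_neg_cancel q ▸ h.rpow_mul q
  refine hslow.isLittleO_of_add_le_two_mul (.of_forall fun x => setIntegral_rpow_nonneg
    measurableSet_Ioc Ioc_subset_Ioi_self) (sub_pos.2 hc1) ?_
  filter_upwards [h.eventually_comp_mul_le two_pos hc, eventually_gt_atTop 0] with x hdecay hx
  have hx2 : x ≤ 2 * x := by linarith
  rw [setIntegral_Ioc_eq_add (hint _) hx.le hx2]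
  gcongr
  calc (1 - c) * (x ^ q * μ.real (Ioi x)) = x ^ q * (μ.real (Ioi x) - c * μ.real (Ioi x)) := by
        ring
    _ ≤ x ^ q * (μ.real (Ioi x) - μ.real (Ioi (2 * x))) := by gcongr
    _ ≤ ∫ t in Ioc x (2 * x), t ^ q ∂μ :=
        rpow_mul_measureReal_Ioi_sub_le_setIntegral_Ioc hq.le hx.le (h.measure_Ioi_ne_top hx) hx2
          ((hint _).mono_set (Ioc_subset_Ioc_left hx.le))

theorem isEquivalent_setIntegral_Ioc_rpow_comp_mul
    (h : RegVarying (fun x => μ.real (Ioi x)) (-q)) (hq : 0 < q)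
    (hint : ∀ x, IntegrableOn (fun t => t ^ q) (Ioc 0 x) μ) (ha : 1 ≤ a) :
    (fun x => ∫ t in Ioc 0 (a * x), t ^ q ∂μ) ~[atTop] fun x => ∫ t in Ioc 0 x, t ^ q ∂μ := by
  refine IsBigO.trans_isLittleO (IsBigO.of_bound (a ^ q) ?_)
    (h.isLittleO_setIntegral_Ioc_rpow hq hint)
  filter_upwards [eventually_gt_atTop 0] with x hx
  have hax : x ≤ a * x := le_mul_of_one_le_left hx.le ha
  rw [Pi.sub_apply, setIntegral_Ioc_eq_add (hint _) hx.le hax, add_sub_cancel_left,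
    Real.norm_of_nonneg (setIntegral_rpow_nonneg measurableSet_Ioc
      (Ioc_subset_Ioi_self.trans (Ioi_subset_Ioi hx.le))),
    Real.norm_of_nonneg ((h.rpow_mul q).1 x hx).le, ← mul_assoc,
    ← Real.mul_rpow (zero_le_one.trans ha) hx.le]
  exact setIntegral_Ioc_rpow_le hq.le hx.le (h.measure_Ioi_ne_top hx) hax

end RegVarying

lemma tendsto_setIntegral_Ioc_zero_atTop (hf : ∀ t, 0 < t → 0 ≤ f t)
    (hint : ∀ x, IntegrableOn f (Ioc 0 x) μ) (hf_top : ¬IntegrableOn f (Ioi 0) μ) :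
    Tendsto (fun x => ∫ t in Ioc 0 x, f t ∂μ) atTop atTop := by
  refine (tendsto_atTop_of_monotone fun x y hxy => ?_).resolve_right ?_
  · exact setIntegral_mono_set (hint y)
      ((ae_restrict_mem measurableSet_Ioc).mono fun t ht => hf t ht.1)
      (Ioc_subset_Ioc_right hxy).eventuallyLE
  · rintro ⟨l, hl⟩
    have hcover : AECover (μ.restrict (Ioi 0)) atTop fun x : ℝ => Iic x :=
      aecover_Iic tendsto_id
    have hIoc (x : ℝ) : (μ.restrict (Ioi 0)).restrict (Iic x) = μ.restrict (Ioc 0 x) := by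
      rw [Measure.restrict_restrict measurableSet_Iic, Iic_inter_Ioi]
    refine hf_top (hcover.integrable_of_integral_tendsto_of_nonneg_ae l (fun x => ?_)
      ((ae_restrict_mem measurableSet_Ioi).mono hf) ?_)
    · rw [IntegrableOn, hIoc]
      exact hint x
    · simpa only [hIoc] using hl

end Karamata

section SmoothedMoments

/-- The smoothly truncated moment `∫ tⁿ / (1 + (t / y)²) dμ(t)`; for `n = p + 1` it is
`-y * Im r_G(iy)`. -/
def smoothTruncMoment (μ : Measure ℝ) (n : ℕ) (y : ℝ) : ℝ :=
  ∫ t, t ^ n * (y ^ 2 / (t ^ 2 + y ^ 2)) ∂μ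

/-- The smoothed tail moment `∫ tⁿ / (1 + (y / t)²) dμ(t)`; for `n = p` it is `-Re r_G(iy)`. -/
def smoothTailMoment (μ : Measure ℝ) (n : ℕ) (y : ℝ) : ℝ :=
  ∫ t, t ^ n * (t ^ 2 / (t ^ 2 + y ^ 2)) ∂μ

variable {μ : Measure ℝ} {p : ℕ} {x y t c : ℝ} {f : ℝ → ℝ}

lemma ae_nonneg_of_measure_Iio_eq_zero (h : μ (Iio 0) = 0) : ∀ᵐ t ∂μ, 0 ≤ t :=
  (measure_eq_zero_iff_ae_notMem.1 h).mono fun _ ht => not_lt.1 ht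

lemma integrable_pow_iff_lintegral_ne_top (h0 : ∀ᵐ t ∂μ, 0 ≤ t) :
    Integrable (fun t => t ^ p) μ ↔ ∫⁻ t, ENNReal.ofReal (t ^ p) ∂μ ≠ ⊤ :=
  (lintegral_ofReal_ne_top_iff_integrable (by fun_prop)
    (h0.mono fun t ht => pow_nonneg ht p)).symm

lemma integrable_smoothTail_kernel (hi : Integrable (fun t => t ^ p) μ) (y : ℝ) :
    Integrable (fun t => t ^ p * (t ^ 2 / (t ^ 2 + y ^ 2))) μ := by
  refine hi.mul_bdd (c := 1) (Measurable.aestronglyMeasurable (by fun_prop))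
    (.of_forall fun t => ?_)
  rw [Real.norm_of_nonneg (by positivity)]
  exact div_le_one_of_le₀ (le_add_of_nonneg_right (sq_nonneg y)) (by positivity)

lemma mul_sq_div_sq_add_sq_le (ht : 0 ≤ t) (hy : 0 < y) : t * (y ^ 2 / (t ^ 2 + y ^ 2)) ≤ y := by
  rw [mul_div_assoc', div_le_iff₀ (by positivity)]
  nlinarith [mul_nonneg hy.le (sq_nonneg (t - y)), mul_nonneg hy.le (mul_nonneg ht hy.le)]

lemma integrable_smoothTrunc_kernel (hi : Integrable (fun t => t ^ p) μ) (hy : 0 < y) :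
    Integrable (fun t => t ^ (p + 1) * (y ^ 2 / (t ^ 2 + y ^ 2))) μ := by
  simp only [pow_succ _ p, mul_assoc]
  refine hi.mul_bdd (c := y) (Measurable.aestronglyMeasurable (by fun_prop))
    (.of_forall fun t => ?_)
  rw [norm_mul, Real.norm_of_nonneg (by positivity : 0 ≤ y ^ 2 / (t ^ 2 + y ^ 2))]
  simpa using mul_sq_div_sq_add_sq_le (abs_nonneg t) hy

lemma rG_kernel_I_mul_eq (hy : 0 < y) :
    (t : ℂ) ^ (p + 1) / (Complex.I * y - t) =
      (-(t ^ p * (t ^ 2 / (t ^ 2 + y ^ 2))) : ℝ)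
        + (-(y⁻¹ * (t ^ (p + 1) * (y ^ 2 / (t ^ 2 + y ^ 2)))) : ℝ) * Complex.I := by
  have hsq : (t : ℂ) ^ 2 + (y : ℂ) ^ 2 ≠ 0 := by exact_mod_cast (by positivity : t ^ 2 + y ^ 2 ≠ 0)
  have hfactor : (Complex.I * y - t) * (Complex.I * y + t) = -((t : ℂ) ^ 2 + (y : ℂ) ^ 2) := by
    linear_combination (y : ℂ) ^ 2 * Complex.I_sq
  have hden : Complex.I * y - t ≠ 0 := fun h => hsq (neg_eq_zero.1 (by rw [← hfactor, h, zero_mul]))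
  push_cast
  rw [div_eq_iff hden]
  field_simp
  linear_combination ((t : ℂ) ^ (p + 1) * (y : ℂ) ^ 2) * Complex.I_sq

lemma rG_I_mul (hi : Integrable (fun t => t ^ p) μ) (hy : 0 < y) :
    rG μ p (Complex.I * y) =
      (-smoothTailMoment μ p y : ℝ) + (-(y⁻¹ * smoothTruncMoment μ (p + 1) y) : ℝ) * Complex.I := by
  have htail := (integrable_smoothTail_kernel hi y).neg
  have htrunc := ((integrable_smoothTrunc_kernel hi hy).const_mul y⁻¹).neg
  simp only [rG, smoothTailMoment, smoothTruncMoment, rG_kernel_I_mul_eq hy,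
    ← integral_const_mul, ← integral_neg, ← integral_complex_ofReal]
  rw [← integral_mul_const]
  exact integral_add htail.ofReal (htrunc.ofReal.mul_const _)

lemma rG_I_mul_re (hi : Integrable (fun t => t ^ p) μ) (hy : 0 < y) :
    (rG μ p (Complex.I * y)).re = -smoothTailMoment μ p y := by
  simp [rG_I_mul hi hy]

lemma rG_I_mul_im (hi : Integrable (fun t => t ^ p) μ) (hy : 0 < y) :
    (rG μ p (Complex.I * y)).im = -(y⁻¹ * smoothTruncMoment μ (p + 1) y) := by
  simp [rG_I_mul hi hy]

lemma integrableOn_Ioc_pow_add (hi : Integrable (fun t => t ^ p) μ) (k : ℕ) (x y : ℝ) :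
    IntegrableOn (fun t => t ^ (p + k)) (Ioc x y) μ := by
  simp only [pow_add]
  exact hi.integrableOn.mul_continuousOn_of_subset (by fun_prop) measurableSet_Ioc isCompact_Icc
    Ioc_subset_Icc_self

lemma integral_eq_setIntegral_Ioi_add_Ioc (h0 : ∀ᵐ t ∂μ, 0 ≤ t) (hf : Integrable f μ)
    (hf0 : f 0 = 0) (hx : 0 ≤ x) :
    ∫ t, f t ∂μ = (∫ t in Ioi x, f t ∂μ) + ∫ t in Ioc 0 x, f t ∂μ := by
  rw [← setIntegral_Ioi_eq_add hf.integrableOn hx]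
  refine (setIntegral_eq_integral_of_ae_compl_eq_zero (h0.mono fun t ht hmem => ?_)).symm
  rw [le_antisymm (not_lt.1 hmem) ht, hf0]

lemma smoothTruncMoment_monotoneOn (h0 : ∀ᵐ t ∂μ, 0 ≤ t) (hi : Integrable (fun t => t ^ p) μ) :
    MonotoneOn (smoothTruncMoment μ (p + 1)) (Ioi 0) := by
  intro x hx y hy hxy
  refine integral_mono_ae (integrable_smoothTrunc_kernel hi hx)
    (integrable_smoothTrunc_kernel hi hy) (h0.mono fun t ht => ?_)
  rw [mem_Ioi] at hx hy
  have hsq : x ^ 2 ≤ y ^ 2 := by gcongr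
  refine mul_le_mul_of_nonneg_left ?_ (pow_nonneg ht _)
  rw [div_le_div_iff₀ (by positivity) (by positivity)]
  linarith [mul_le_mul_of_nonneg_right hsq (sq_nonneg t)]

lemma smoothTruncMoment_pos (h0 : ∀ᵐ t ∂μ, 0 ≤ t) (hi : Integrable (fun t => t ^ p) μ)
    (hpos : μ (Ioi 0) ≠ 0) (hy : 0 < y) : 0 < smoothTruncMoment μ (p + 1) y := by
  refine (integral_pos_iff_support_of_nonneg_ae (h0.mono fun t ht => ?_)
    (integrable_smoothTrunc_kernel hi hy)).2
    ((pos_iff_ne_zero.2 hpos).trans_le (measure_mono fun t (ht : 0 < t) => ?_))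
  · simp only [Pi.zero_apply]
    positivity
  · simp only [Function.mem_support]
    positivity

lemma smoothTruncMoment_le (h0 : ∀ᵐ t ∂μ, 0 ≤ t) (hi : Integrable (fun t => t ^ p) μ)
    (hy : 0 < y) :
    smoothTruncMoment μ (p + 1) y ≤
      (∫ t in Ioc 0 y, t ^ (p + 1) ∂μ) + y * ∫ t in Ioi y, t ^ p ∂μ := by
  have hker := integrable_smoothTrunc_kernel hi hy
  rw [smoothTruncMoment, integral_eq_setIntegral_Ioi_add_Ioc h0 hker (by simp) hy.le, add_comm,
    ← integral_const_mul]
  refine add_le_add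
    (setIntegral_mono_on hker.integrableOn (integrableOn_Ioc_pow_add hi 1 0 y) measurableSet_Ioc
      fun t ht => mul_le_of_le_one_right (pow_nonneg ht.1.le _)
        (div_le_one_of_le₀ (le_add_of_nonneg_left (sq_nonneg t)) (by positivity)))
    (setIntegral_mono_on hker.integrableOn (hi.const_mul y).integrableOn measurableSet_Ioi
      fun t ht => ?_)
  have ht0 : 0 ≤ t := hy.le.trans (mem_Ioi.1 ht).le
  rw [pow_succ, mul_assoc, mul_comm y]
  gcongr
  exact mul_sq_div_sq_add_sq_le ht0 hy

lemma le_smoothTruncMoment (h0 : ∀ᵐ t ∂μ, 0 ≤ t) (hi : Integrable (fun t => t ^ p) μ)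
    (hy : 0 < y) :
    (∫ t in Ioc 0 y, t ^ (p + 1) ∂μ) - (y ^ 2)⁻¹ * ∫ t in Ioc 0 y, t ^ (p + 3) ∂μ ≤
      smoothTruncMoment μ (p + 1) y := by
  have hker := integrable_smoothTrunc_kernel hi hy
  have hint1 := integrableOn_Ioc_pow_add hi 1 0 y
  have hint3 := (integrableOn_Ioc_pow_add hi 3 0 y).const_mul (y ^ 2)⁻¹
  calc (∫ t in Ioc 0 y, t ^ (p + 1) ∂μ) - (y ^ 2)⁻¹ * ∫ t in Ioc 0 y, t ^ (p + 3) ∂μ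
      = ∫ t in Ioc 0 y, (t ^ (p + 1) - (y ^ 2)⁻¹ * t ^ (p + 3)) ∂μ := by
        rw [integral_sub hint1 hint3, integral_const_mul]
    _ ≤ ∫ t in Ioc 0 y, t ^ (p + 1) * (y ^ 2 / (t ^ 2 + y ^ 2)) ∂μ := by
        refine setIntegral_mono_on (hint1.sub hint3) hker.integrableOn measurableSet_Ioc
          fun t ht => ?_
        have hone_sub : 1 - (y ^ 2)⁻¹ * t ^ 2 ≤ y ^ 2 / (t ^ 2 + y ^ 2) := by
          rw [le_div_iff₀ (by positivity), ← sub_nonneg]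
          have hexp : y ^ 2 - (1 - (y ^ 2)⁻¹ * t ^ 2) * (t ^ 2 + y ^ 2) = (y ^ 2)⁻¹ * t ^ 4 := by
            field_simp
            ring
          rw [hexp]
          positivity
        calc t ^ (p + 1) - (y ^ 2)⁻¹ * t ^ (p + 3) = t ^ (p + 1) * (1 - (y ^ 2)⁻¹ * t ^ 2) := by
              ring
          _ ≤ t ^ (p + 1) * (y ^ 2 / (t ^ 2 + y ^ 2)) :=
              mul_le_mul_of_nonneg_left hone_sub (pow_nonneg ht.1.le _)
    _ ≤ smoothTruncMoment μ (p + 1) y :=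
        setIntegral_le_integral hker (h0.mono fun t ht => by simp only [Pi.zero_apply]; positivity)

lemma norm_smoothTruncMoment_sub_le (h0 : ∀ᵐ t ∂μ, 0 ≤ t) (hi : Integrable (fun t => t ^ p) μ)
    (hy : 0 < y) :
    ‖smoothTruncMoment μ (p + 1) y - ∫ t in Ioc 0 y, t ^ (p + 1) ∂μ‖ ≤
      (y ^ 2)⁻¹ * (∫ t in Ioc 0 y, t ^ (p + 3) ∂μ) + y * ∫ t in Ioi y, t ^ p ∂μ := by
  have hbody : 0 ≤ (y ^ 2)⁻¹ * ∫ t in Ioc 0 y, t ^ (p + 3) ∂μ :=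
    mul_nonneg (by positivity)
      (setIntegral_nonneg measurableSet_Ioc fun t ht => pow_nonneg ht.1.le _)
  have htail : 0 ≤ y * ∫ t in Ioi y, t ^ p ∂μ :=
    mul_nonneg hy.le
      (setIntegral_nonneg measurableSet_Ioi fun t ht => pow_nonneg (hy.trans ht).le _)
  rw [Real.norm_eq_abs, abs_sub_le_iff]
  constructor
  · linarith [smoothTruncMoment_le h0 hi hy]
  · linarith [le_smoothTruncMoment h0 hi hy]

lemma isLittleO_pow_mul_measureReal_Ioi (hi : Integrable (fun t => t ^ p) μ)
    (h : RegVarying (fun y => μ.real (Ioi y)) (-(p + 1))) :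
    (fun y => y ^ (p + 1) * μ.real (Ioi y)) =o[atTop]
      fun y => ∫ t in Ioc 0 y, t ^ (p + 1) ∂μ := by
  simpa only [Real.rpow_natCast] using
    RegVarying.isLittleO_setIntegral_Ioc_rpow (q := (p + 1 : ℕ)) (by exact_mod_cast h)
      (by positivity) (by simpa only [Real.rpow_natCast] using integrableOn_Ioc_pow_add hi 1 0)

lemma isEquivalent_smoothTruncMoment (h0 : ∀ᵐ t ∂μ, 0 ≤ t) (hi : Integrable (fun t => t ^ p) μ)
    (h : RegVarying (fun y => μ.real (Ioi y)) (-(p + 1))) :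
    smoothTruncMoment μ (p + 1) ~[atTop] fun y => ∫ t in Ioc 0 y, t ^ (p + 1) ∂μ := by
  have hbody : (fun y => ∫ t in Ioc 0 y, t ^ (p + 3) ∂μ) =O[atTop]
      fun y => y ^ (p + 3) * μ.real (Ioi y) := by
    simpa only [Real.rpow_natCast] using
      h.isBigO_setIntegral_Ioc_rpow (q := (p + 3 : ℕ)) (by positivity) (by push_cast; linarith)
        (by simpa only [Real.rpow_natCast] using integrableOn_Ioc_pow_add hi 3 0)
  have htail : (fun y => ∫ t in Ioi y, t ^ p ∂μ) =O[atTop] fun y => y ^ p * μ.real (Ioi y) := by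
    simpa only [Real.rpow_natCast] using
      h.isBigO_setIntegral_Ioi_rpow (q := p) p.cast_nonneg (by linarith)
        (by simpa only [Real.rpow_natCast] using fun x _ => hi.integrableOn)
  have hbody' : (fun y => (y ^ 2)⁻¹ * ∫ t in Ioc 0 y, t ^ (p + 3) ∂μ) =O[atTop]
      fun y => y ^ (p + 1) * μ.real (Ioi y) := by
    refine ((isBigO_refl (fun y : ℝ => (y ^ 2)⁻¹) atTop).mul hbody).congr' .rfl ?_
    filter_upwards [eventually_gt_atTop 0] with y hy
    field_simp
    ring
  have htail' : (fun y => y * ∫ t in Ioi y, t ^ p ∂μ) =O[atTop]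
      fun y => y ^ (p + 1) * μ.real (Ioi y) :=
    ((isBigO_refl (fun y : ℝ => y) atTop).mul htail).congr_right fun y => by ring
  refine IsBigO.trans_isLittleO (IsBigO.trans (IsBigO.of_bound' ?_) (hbody'.add htail'))
    (isLittleO_pow_mul_measureReal_Ioi hi h)
  filter_upwards [eventually_gt_atTop 0] with y hy
  exact (norm_smoothTruncMoment_sub_le h0 hi hy).trans (Real.le_norm_self _)

theorem regVarying_smoothTruncMoment (h0 : ∀ᵐ t ∂μ, 0 ≤ t) (hi : Integrable (fun t => t ^ p) μ)
    (h : RegVarying (fun y => μ.real (Ioi y)) (-(p + 1))) :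
    RegVarying (smoothTruncMoment μ (p + 1)) 0 := by
  have hpos : ∀ y, 0 < y → 0 < smoothTruncMoment μ (p + 1) y := fun y =>
    smoothTruncMoment_pos h0 hi h.measure_Ioi_zero_ne_zero
  refine .of_one_le hpos fun a ha => ?_
  have hequiv := isEquivalent_smoothTruncMoment h0 hi h
  have hM : (fun y => ∫ t in Ioc 0 (a * y), t ^ (p + 1) ∂μ) ~[atTop]
      fun y => ∫ t in Ioc 0 y, t ^ (p + 1) ∂μ := by
    simpa only [Real.rpow_natCast] using
      RegVarying.isEquivalent_setIntegral_Ioc_rpow_comp_mul (q := (p + 1 : ℕ))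
        (by exact_mod_cast h) (by positivity)
        (by simpa only [Real.rpow_natCast] using integrableOn_Ioc_pow_add hi 1 0) ha
  have hL := ((hequiv.comp_tendsto (tendsto_id.const_mul_atTop (zero_lt_one.trans_le ha))).trans
    hM).trans hequiv.symm
  rw [Real.rpow_zero]
  refine (isEquivalent_iff_tendsto_one ?_).1 hL
  filter_upwards [eventually_gt_atTop 0] with y hy using (hpos y hy).ne'

lemma half_mul_setIntegral_le_smoothTruncMoment (h0 : ∀ᵐ t ∂μ, 0 ≤ t)
    (hi : Integrable (fun t => t ^ p) μ) (hy : 0 < y) :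
    2⁻¹ * ∫ t in Ioc 0 y, t ^ (p + 1) ∂μ ≤ smoothTruncMoment μ (p + 1) y := by
  have hker := integrable_smoothTrunc_kernel hi hy
  rw [← integral_const_mul]
  refine (setIntegral_mono_on ((integrableOn_Ioc_pow_add hi 1 0 y).const_mul _) hker.integrableOn
    measurableSet_Ioc fun t ht => ?_).trans (setIntegral_le_integral hker
      (h0.mono fun t ht => by simp only [Pi.zero_apply]; positivity))
  have ht0 : 0 ≤ t := ht.1.le
  have hty : t ^ 2 ≤ y ^ 2 := by
    gcongr
    exact ht.2
  have hhalf : 2⁻¹ ≤ y ^ 2 / (t ^ 2 + y ^ 2) := by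
    rw [le_div_iff₀ (by positivity)]
    linarith
  rw [mul_comm]
  gcongr

lemma tendsto_smoothTruncMoment (h0 : ∀ᵐ t ∂μ, 0 ≤ t) (hi : Integrable (fun t => t ^ p) μ)
    (htop : ¬Integrable (fun t => t ^ (p + 1)) μ) :
    Tendsto (smoothTruncMoment μ (p + 1)) atTop atTop := by
  have htrunc : Tendsto (fun y => ∫ t in Ioc 0 y, t ^ (p + 1) ∂μ) atTop atTop := by
    refine tendsto_setIntegral_Ioc_zero_atTop (fun t ht => by positivity)
      (integrableOn_Ioc_pow_add hi 1 0) fun hint => htop ?_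
    refine hint.integrable_of_ae_notMem_eq_zero (h0.mono fun t ht hmem => ?_)
    rw [le_antisymm (not_lt.1 hmem) ht, zero_pow p.succ_ne_zero]
  refine tendsto_atTop_mono' _ ?_ (htrunc.const_mul_atTop (inv_pos.2 two_pos))
  filter_upwards [eventually_gt_atTop 0] with y hy
  exact half_mul_setIntegral_le_smoothTruncMoment h0 hi hy

lemma le_smoothTailMoment (h0 : ∀ᵐ t ∂μ, 0 ≤ t) (hi : Integrable (fun t => t ^ p) μ)
    (hμ : μ (Ioi x) ≠ ⊤) (hx : 0 < x) (y : ℝ) :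
    x ^ p * (x ^ 2 / (x ^ 2 + y ^ 2)) * μ.real (Ioi x) ≤ smoothTailMoment μ p y := by
  have hker := integrable_smoothTail_kernel hi y
  refine (setIntegral_ge_of_const_le_real measurableSet_Ioi hμ (fun t ht => ?_)
    hker.integrableOn).trans (setIntegral_le_integral hker
      (h0.mono fun t ht => by simp only [Pi.zero_apply]; positivity))
  have hxt : x ≤ t := (mem_Ioi.1 ht).le
  have hsq : x ^ 2 ≤ t ^ 2 := by gcongr
  have ht0 : 0 < t := hx.trans ht
  have hratio : x ^ 2 / (x ^ 2 + y ^ 2) ≤ t ^ 2 / (t ^ 2 + y ^ 2) := by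
    rw [div_le_div_iff₀ (by positivity) (by positivity)]
    linarith [mul_le_mul_of_nonneg_right hsq (sq_nonneg y)]
  gcongr

theorem tendsto_rpow_mul_smoothTailMoment (h0 : ∀ᵐ t ∂μ, 0 ≤ t)
    (hi : Integrable (fun t => t ^ p) μ) (h : RegVarying (fun y => μ.real (Ioi y)) (-p)) {ε : ℝ}
    (hε : 0 < ε) : Tendsto (fun y => y ^ ε * smoothTailMoment μ p y) atTop atTop := by
  have hF := h.tendsto_rpow_mul_atTop_of_antitoneOn h.antitoneOn_measureReal_Ioi
    (σ := ε + p) (by linarith)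
  refine tendsto_atTop_mono' _ ?_ (hF.const_mul_atTop (half_pos one_pos))
  filter_upwards [eventually_gt_atTop 0] with y hy
  calc 1 / 2 * (y ^ (ε + p) * μ.real (Ioi y))
      = y ^ ε * (y ^ p * (y ^ 2 / (y ^ 2 + y ^ 2)) * μ.real (Ioi y)) := by
        rw [Real.rpow_add hy, Real.rpow_natCast]
        field_simp
        ring
    _ ≤ y ^ ε * smoothTailMoment μ p y := by
        gcongr
        exact le_smoothTailMoment h0 hi (h.measure_Ioi_ne_top hy) hy y

lemma smoothTailMoment_le (h0 : ∀ᵐ t ∂μ, 0 ≤ t) (hi : Integrable (fun t => t ^ p) μ)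
    (hx : 0 ≤ x) (hy : 0 < y) :
    smoothTailMoment μ p y ≤
      (∫ t in Ioi x, t ^ p ∂μ) + (y ^ 2)⁻¹ * ∫ t in Ioc 0 x, t ^ (p + 2) ∂μ := by
  have hker := integrable_smoothTail_kernel hi y
  rw [smoothTailMoment, integral_eq_setIntegral_Ioi_add_Ioc h0 hker (by simp) hx,
    ← integral_const_mul]
  refine add_le_add
    (setIntegral_mono_on hker.integrableOn hi.integrableOn measurableSet_Ioi fun t ht =>
      mul_le_of_le_one_right (pow_nonneg (hx.trans (mem_Ioi.1 ht).le) _)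
        (div_le_one_of_le₀ (le_add_of_nonneg_right (sq_nonneg y)) (by positivity)))
    (setIntegral_mono_on hker.integrableOn ((integrableOn_Ioc_pow_add hi 2 0 x).const_mul _)
      measurableSet_Ioc fun t ht => ?_)
  have ht0 : 0 ≤ t := ht.1.le
  calc t ^ p * (t ^ 2 / (t ^ 2 + y ^ 2)) ≤ t ^ p * (t ^ 2 / y ^ 2) := by
        gcongr
        exact le_add_of_nonneg_left (sq_nonneg t)
    _ = (y ^ 2)⁻¹ * t ^ (p + 2) := by ring

lemma eventually_le_smoothTailMoment_zero (h0 : ∀ᵐ t ∂μ, 0 ≤ t)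
    (h : RegVarying (fun y => μ.real (Ioi y)) 0) (hi : Integrable (fun t => t ^ 0) μ) (hc : c < 1) :
    ∀ᶠ y in atTop, c * μ.real (Ioi y) ≤ smoothTailMoment μ 0 y := by
  have hlim : Tendsto (fun δ : ℝ => 1 / (1 + δ ^ 2)) (𝓝[>] 0) (𝓝 1) := by
    have hcont : Continuous fun δ : ℝ => 1 / (1 + δ ^ 2) :=
      continuous_const.div (by fun_prop) fun δ => by positivity
    simpa using (hcont.tendsto 0).mono_left nhdsWithin_le_nhds
  obtain ⟨δ, hcδ, (hδ : 0 < δ)⟩ :=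
    ((hlim.eventually_const_lt hc).and self_mem_nhdsWithin).exists
  have hslow : Tendsto (fun y => 1 / (1 + δ ^ 2) * (μ.real (Ioi (δ⁻¹ * y)) / μ.real (Ioi y)))
      atTop (𝓝 (1 / (1 + δ ^ 2))) := by
    simpa only [neg_zero, Real.rpow_zero, mul_one] using
      (h.2 δ⁻¹ (inv_pos.2 hδ)).const_mul (1 / (1 + δ ^ 2))
  filter_upwards [hslow.eventually_const_lt hcδ, eventually_gt_atTop 0] with y hcy hy
  have hx : 0 < δ⁻¹ * y := by positivity
  have hratio : (δ⁻¹ * y) ^ 2 / ((δ⁻¹ * y) ^ 2 + y ^ 2) = 1 / (1 + δ ^ 2) := by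
    field_simp
  have hle := le_smoothTailMoment h0 hi (h.measure_Ioi_ne_top hx) hx y
  rw [pow_zero, one_mul, hratio] at hle
  rw [mul_div_assoc', lt_div_iff₀ (h.1 y hy)] at hcy
  exact hcy.le.trans hle

lemma eventually_smoothTailMoment_zero_le (h0 : ∀ᵐ t ∂μ, 0 ≤ t)
    (h : RegVarying (fun y => μ.real (Ioi y)) 0) (hi : Integrable (fun t => t ^ 0) μ) (hc : 1 < c) :
    ∀ᶠ y in atTop, smoothTailMoment μ 0 y ≤ c * μ.real (Ioi y) := by
  obtain ⟨C, hC⟩ : ∃ C, ∀ᶠ x in atTop, ∫ t in Ioc 0 x, t ^ 2 ∂μ ≤ C * (x ^ 2 * μ.real (Ioi x)) := by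
    have hO := h.isBigO_setIntegral_Ioc_rpow (q := (2 : ℕ)) (by norm_num) (by norm_num)
      (by simpa only [Real.rpow_natCast, zero_add] using integrableOn_Ioc_pow_add hi 2 0)
    simp only [Real.rpow_natCast] at hO
    obtain ⟨C, hC⟩ := hO.bound
    refine ⟨C, hC.mono fun x hx => (Real.le_norm_self _).trans (hx.trans_eq ?_)⟩
    rw [Real.norm_of_nonneg (by positivity)]
  have hlim : Tendsto (fun δ : ℝ => 1 + C * δ ^ 2) (𝓝[>] 0) (𝓝 1) := by
    have hcont : Continuous fun δ : ℝ => 1 + C * δ ^ 2 := by fun_prop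
    simpa using (hcont.tendsto 0).mono_left nhdsWithin_le_nhds
  obtain ⟨δ, hcδ, (hδ : 0 < δ)⟩ :=
    ((hlim.eventually_lt_const hc).and self_mem_nhdsWithin).exists
  have hslow : Tendsto (fun y => (1 + C * δ ^ 2) * (μ.real (Ioi (δ * y)) / μ.real (Ioi y)))
      atTop (𝓝 (1 + C * δ ^ 2)) := by
    simpa using (h.2 δ hδ).const_mul (1 + C * δ ^ 2)
  filter_upwards [hslow.eventually_lt_const hcδ,
    (tendsto_id.const_mul_atTop hδ).eventually hC, eventually_gt_atTop 0] with y hcy hCy hy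
  rw [mul_div_assoc', div_lt_iff₀ (h.1 y hy)] at hcy
  calc smoothTailMoment μ 0 y
      ≤ μ.real (Ioi (δ * y)) + (y ^ 2)⁻¹ * ∫ t in Ioc 0 (δ * y), t ^ 2 ∂μ := by
        simpa using smoothTailMoment_le h0 hi (mul_pos hδ hy).le hy
    _ ≤ μ.real (Ioi (δ * y)) + (y ^ 2)⁻¹ * (C * ((δ * y) ^ 2 * μ.real (Ioi (δ * y)))) := by
        gcongr
        exact hCy
    _ = (1 + C * δ ^ 2) * μ.real (Ioi (δ * y)) := by
        field_simp
    _ ≤ c * μ.real (Ioi y) := hcy.le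

theorem tendsto_smoothTailMoment_zero_div (h0 : ∀ᵐ t ∂μ, 0 ≤ t)
    (h : RegVarying (fun y => μ.real (Ioi y)) 0) (hi : Integrable (fun t => t ^ 0) μ) :
    Tendsto (fun y => smoothTailMoment μ 0 y / μ.real (Ioi y)) atTop (𝓝 1) := by
  refine tendsto_order.2 ⟨fun b hb => ?_, fun b hb => ?_⟩
  · obtain ⟨c, hbc, hc⟩ := exists_between hb
    filter_upwards [eventually_le_smoothTailMoment_zero h0 h hi hc, eventually_gt_atTop 0]
      with y hy hy0
    exact hbc.trans_le ((le_div_iff₀ (h.1 y hy0)).2 hy)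
  · obtain ⟨c, hc, hcb⟩ := exists_between hb
    filter_upwards [eventually_smoothTailMoment_zero_le h0 h hi hc, eventually_gt_atTop 0]
      with y hy hy0
    exact ((div_le_iff₀ (h.1 y hy0)).2 hy).trans_lt hcb

end SmoothedMoments

section Boundary

variable {μ : Measure ℝ} {p : ℕ} {ε : ℝ}

lemma tendsto_rpow_mul_abs_rG_re (h0 : ∀ᵐ t ∂μ, 0 ≤ t) (hi : Integrable (fun t => t ^ p) μ)
    (h : RegVarying (fun y => μ.real (Ioi y)) (-p)) (hε : 0 < ε) :
    Tendsto (fun y : ℝ => y ^ ε * |(rG μ p (Complex.I * y)).re|) atTop atTop := by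
  refine tendsto_atTop_mono' _ ?_ (tendsto_rpow_mul_smoothTailMoment h0 hi h hε)
  filter_upwards [eventually_gt_atTop 0] with y hy
  rw [rG_I_mul_re hi hy, abs_neg]
  gcongr
  exact le_abs_self _

lemma tendsto_rG_re_div_measureReal_Ioi (h0 : ∀ᵐ t ∂μ, 0 ≤ t)
    (hi : Integrable (fun t => t ^ 0) μ) (h : RegVarying (fun y => μ.real (Ioi y)) 0) :
    Tendsto (fun y : ℝ => (rG μ 0 (Complex.I * y)).re / μ.real (Ioi y)) atTop (𝓝 (-1)) := by
  refine (tendsto_smoothTailMoment_zero_div h0 h hi).neg.congr' ?_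
  filter_upwards [eventually_gt_atTop 0] with y hy
  rw [rG_I_mul_re hi hy, neg_div]

lemma regVarying_neg_rG_im (h0 : ∀ᵐ t ∂μ, 0 ≤ t) (hi : Integrable (fun t => t ^ p) μ)
    (h : RegVarying (fun y => μ.real (Ioi y)) (-(p + 1))) :
    RegVarying (fun y : ℝ => -(rG μ p (Complex.I * y)).im) (-1) := by
  have hL := (regVarying_smoothTruncMoment h0 hi h).rpow_mul (-1)
  rw [add_zero] at hL
  refine hL.congr fun y hy => ?_
  simp only [rG_I_mul_im hi hy, neg_neg, Real.rpow_neg_one]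

lemma tendsto_mul_abs_rG_im (h0 : ∀ᵐ t ∂μ, 0 ≤ t) (hi : Integrable (fun t => t ^ p) μ)
    (htop : ¬Integrable (fun t => t ^ (p + 1)) μ) :
    Tendsto (fun y : ℝ => y * |(rG μ p (Complex.I * y)).im|) atTop atTop := by
  refine tendsto_atTop_mono' _ ?_ (tendsto_smoothTruncMoment h0 hi htop)
  filter_upwards [eventually_gt_atTop 0] with y hy
  rw [rG_I_mul_im hi hy, abs_neg, abs_mul, abs_of_pos (inv_pos.2 hy), mul_inv_cancel_left₀ hy.ne']
  exact le_abs_self _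

lemma tendsto_rpow_mul_rG_im (h0 : ∀ᵐ t ∂μ, 0 ≤ t) (hi : Integrable (fun t => t ^ p) μ)
    (h : RegVarying (fun y => μ.real (Ioi y)) (-(p + 1))) (hε : 0 < ε) :
    Tendsto (fun y : ℝ => y ^ (1 - ε) * (rG μ p (Complex.I * y)).im) atTop (𝓝 0) := by
  have hL := ((regVarying_smoothTruncMoment h0 hi h).tendsto_rpow_mul_zero_of_monotoneOn
    (smoothTruncMoment_monotoneOn h0 hi) (σ := -ε) (by linarith)).neg
  rw [neg_zero] at hL
  refine hL.congr' ?_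
  filter_upwards [eventually_gt_atTop 0] with y hy
  rw [rG_I_mul_im hi hy, mul_neg, ← mul_assoc, ← Real.rpow_neg_one y, ← Real.rpow_add hy,
    show 1 - ε + -1 = -ε by ring]

end Boundary

theorem stmt18_general (μ : Measure ℝ) (p : ℕ) (hneg : μ (Iio 0) = 0)
    (hfin : ∫⁻ t, ENNReal.ofReal (t ^ p) ∂μ ≠ ⊤) :
    (RegVarying (fun y => μ.real (Ioi y)) (-p) →
      (∀ ε : ℝ, 0 < ε →
        Tendsto (fun y : ℝ => y ^ ε * |(rG μ p (Complex.I * y)).re|) atTop atTop) ∧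
      (p = 0 →
        Tendsto (fun y : ℝ => (rG μ p (Complex.I * y)).re / μ.real (Ioi y)) atTop (𝓝 (-1)))) ∧
    (RegVarying (fun y => μ.real (Ioi y)) (-(p + 1)) →
      RegVarying (fun y : ℝ => -(rG μ p (Complex.I * y)).im) (-1) ∧
      ∀ ε : ℝ, 0 < ε →
        Tendsto (fun y : ℝ => y ^ (1 - ε) * (rG μ p (Complex.I * y)).im) atTop (𝓝 0)) ∧
    (∫⁻ t, ENNReal.ofReal (t ^ (p + 1)) ∂μ = ⊤ →
      Tendsto (fun y : ℝ => y * |(rG μ p (Complex.I * y)).im|) atTop atTop) := by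
  have h0 := ae_nonneg_of_measure_Iio_eq_zero hneg
  have hi := (integrable_pow_iff_lintegral_ne_top h0).2 hfin
  refine ⟨fun h => ⟨fun ε hε => tendsto_rpow_mul_abs_rG_re h0 hi h hε, ?_⟩,
    fun h => ⟨regVarying_neg_rG_im h0 hi h, fun ε hε => tendsto_rpow_mul_rG_im h0 hi h hε⟩,
    fun htop => tendsto_mul_abs_rG_im h0 hi fun hint =>
      (integrable_pow_iff_lintegral_ne_top h0).1 hint htop⟩
  rintro rfl
  exact tendsto_rG_re_div_measureReal_Ioi h0 hi (by simpa using h)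

/-- Proposition (boundary cases `α = p` and `α = p+1`):
(a) if the tail of `μ ∈ M_p` is regularly varying of index `-p`, then
`y^ε·|Re r_G(iy)| → ∞` for every `ε > 0`, and if `p = 0` then
`Re r_G(iy) ~ −μ((y,∞))`;
(b) if the tail is regularly varying of index `-(p+1)`, then `y ↦ −Im r_G(iy)` is
regularly varying of index `-1`, `y·|Im r_G(iy)| → ∞`, and `y^{1−ε}·Im r_G(iy) → 0`
for every `ε > 0`. -/
theorem stmt18 (μ : Measure ℝ) (p : ℕ) (hμ : MemMp μ p) :
    (RegVarying (fun y : ℝ => (μ (Set.Ioi y)).toReal) (-(p : ℝ)) →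
      (∀ ε : ℝ, 0 < ε →
        Tendsto (fun y : ℝ => y ^ ε * |(rG μ p (Complex.I * (y : ℂ))).re|) atTop atTop) ∧
      (p = 0 →
        Tendsto (fun y : ℝ =>
            (rG μ p (Complex.I * (y : ℂ))).re / (μ (Set.Ioi y)).toReal)
          atTop (nhds (-1)))) ∧
    (RegVarying (fun y : ℝ => (μ (Set.Ioi y)).toReal) (-((p : ℝ) + 1)) →
      RegVarying (fun y : ℝ => -(rG μ p (Complex.I * (y : ℂ))).im) (-1) ∧
      Tendsto (fun y : ℝ => y * |(rG μ p (Complex.I * (y : ℂ))).im|) atTop atTop ∧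
      ∀ ε : ℝ, 0 < ε →
        Tendsto (fun y : ℝ => y ^ (1 - ε) * (rG μ p (Complex.I * (y : ℂ))).im)
          atTop (nhds 0)) := by
  obtain ⟨ha, hb, hc⟩ := stmt18_general μ p hμ.2.1 hμ.2.2.1
  exact ⟨ha, fun h => ⟨(hb h).1, hc hμ.2.2.2, (hb h).2⟩⟩
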